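/- The Small Derivatives Conjecture implies Oesterlé's abc Conjecture: let 0 < η < 1 and assume that for all but finitely many triples of coprime positive integers (a,b,c) satisfying a + b = c and not, up to order, of the form (1, N, q) with q prime, there exists ψ ∈ 𝒯(a,b) such that a, b are ψ-independent and ‖ψ‖ < c^η. Then for every M > 1/(1 − η) there are at most finitely many triples of coprime positive integers a, b, c with a + b = c and c ≥ rad(abc)^M; equivalently, Oesterlé's abc Conjecture holds for every exponent M > 1/(1 − η) up to adjusting for finitely many exceptions. -/

import Mathlib

/-!
For any `ψ` and `n`, the number `n` divides `rad(n) d^ψ(n)`. If `d^ψ` is additive on `a + b = c`,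
then `W^ψ(a,b) = W^ψ(a,c)`, so all of `a`, `b`, `c` contribute to the Wronskian and, by coprimality,
`abc ∣ rad(abc) W^ψ(a,b)`. On the other hand `1/p ≤ log p` gives `|d^ψ(n)| ≤ ‖ψ‖ n log n`, whence
`|W^ψ(a,b)| ≤ ‖ψ‖ ab log(ab)`. If the Wronskian does not vanish, it follows that
`c ≤ rad(abc) ‖ψ‖ log(ab)`. With `rad(abc) ≤ c^(1/M)` and `‖ψ‖ < c^η` this bounds `c`, since
`1/M + η < 1`. The triples excluded from the Small Derivatives Conjecture satisfy `c ≤ rad(abc)`.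
-/

open Finset

/-- The arithmetic derivative attached to `ψ`: `d^ψ(n) = Σ_{p ∣ n} (n·v_p(n)/p)·ψ(p)`,
with `d^ψ(0) = 0` (empty sum). Each term is written as `(n/p)·v_p(n)·ψ(p)`, exact since `p ∣ n`. -/
def dpsi (ψ : ℕ → ℤ) (n : ℤ) : ℤ :=
  ∑ p ∈ n.natAbs.primeFactors, (n / (p : ℤ)) * (n.natAbs.factorization p : ℤ) * ψ p

/-- A derivation: a function on primes (zero off primes) with finite norm. -/
def IsDeriv (ψ : ℕ → ℤ) : Prop :=
  (∀ p : ℕ, ¬ p.Prime → ψ p = 0) ∧ ∃ B : ℤ, ∀ p : ℕ, |ψ p| ≤ B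

/-- The norm `‖ψ‖ = sup_p |ψ(p)|`. -/
noncomputable def dNorm (ψ : ℕ → ℤ) : ℝ := ⨆ p : ℕ, (|ψ p| : ℝ)

/-- Membership in `𝒯(a,b)`: a derivation supported on the primes dividing `ab(a+b)`
satisfying `d^ψ(a+b) = d^ψ(a) + d^ψ(b)`. -/
def MemT (a b : ℕ) (ψ : ℕ → ℤ) : Prop :=
  IsDeriv ψ ∧ (∀ p : ℕ, p.Prime → ¬ p ∣ (a * b * (a + b)) → ψ p = 0) ∧
    dpsi ψ ((a : ℤ) + (b : ℤ)) = dpsi ψ (a : ℤ) + dpsi ψ (b : ℤ)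

/-- The `ψ`-Wronskian `W^ψ(a,b) = a·d^ψ(b) − b·d^ψ(a)`. -/
def Wpsi (ψ : ℕ → ℤ) (a b : ℤ) : ℤ := a * dpsi ψ b - b * dpsi ψ a

/-- Membership in `𝒯°(a,b)`: elements of `𝒯(a,b)` for which `a, b` are `ψ`-dependent. -/
def MemT0 (a b : ℕ) (ψ : ℕ → ℤ) : Prop := MemT a b ψ ∧ Wpsi ψ (a : ℤ) (b : ℤ) = 0

/-- The radical of `n`: product of the distinct primes dividing `n`. -/
def radN (n : ℕ) : ℕ := ∏ p ∈ n.primeFactors, p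

/-- The Small Derivatives Conjecture with exponent `η`: for all but finitely many triples of
coprime positive integers `(a,b,c)` with `a+b=c`, not of the form `(1,N,q)` with `q` prime
up to order, there is `ψ ∈ 𝒯(a,b)` with `a,b` `ψ`-independent and `‖ψ‖ < c^η`. -/
def SDC (η : ℝ) : Prop :=
  {t : ℕ × ℕ × ℕ | 0 < t.1 ∧ 0 < t.2.1 ∧ t.1 + t.2.1 = t.2.2 ∧ Nat.Coprime t.1 t.2.1 ∧
    ¬ (∃ N q : ℕ, q.Prime ∧ ({t.1, t.2.1, t.2.2} : Multiset ℕ) = {1, N, q}) ∧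
    ¬ ∃ ψ : ℕ → ℤ, MemT t.1 t.2.1 ψ ∧ Wpsi ψ (t.1 : ℤ) (t.2.1 : ℤ) ≠ 0 ∧
      dNorm ψ < (t.2.2 : ℝ) ^ η}.Finite

open Filter UniqueFactorizationMonoid

section Radical

lemma radN_eq_radical (n : ℕ) : radN n = radical n :=
  Nat.radical_eq_prod_primeFactors.symm

lemma radN_pos (n : ℕ) : 0 < radN n :=
  radN_eq_radical n ▸ Nat.radical_pos n

lemma radN_dvd_radN {m n : ℕ} (hmn : m ∣ n) (hn : n ≠ 0) : radN m ∣ radN n := by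
  simpa only [radN_eq_radical] using radical_dvd_radical hmn hn

lemma radN_eq_self_of_squarefree {n : ℕ} (hn : Squarefree n) : radN n = n :=
  Nat.prod_primeFactors_of_squarefree hn

lemma le_radN_of_squarefree_of_dvd {m n : ℕ} (hm : Squarefree m) (hmn : m ∣ n) (hn : n ≠ 0) :
    m ≤ radN n := by
  have h := Nat.le_of_dvd (radN_pos n) (radN_dvd_radN hmn hn)
  rwa [radN_eq_self_of_squarefree hm] at h

lemma radN_mul_of_coprime {m n : ℕ} (h : m.Coprime n) : radN (m * n) = radN m * radN n := by
  simpa only [radN_eq_radical] using radical_mul (Nat.coprime_iff_isRelPrime.mp h)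

lemma succ_le_radN_mul_succ {n : ℕ} (hn : Squarefree n) : n + 1 ≤ radN (n * (n + 1)) := by
  have hn0 : 0 < n := Nat.pos_of_ne_zero hn.ne_zero
  have htwo : 2 ≤ radN (n + 1) := by
    rw [radN_eq_radical, Nat.two_le_radical_iff]
    lia
  calc n + 1 ≤ n * 2 := by lia
    _ ≤ n * radN (n + 1) := Nat.mul_le_mul_left n htwo
    _ = radN (n * (n + 1)) := by
      rw [radN_mul_of_coprime (by simp), radN_eq_self_of_squarefree hn]

lemma add_le_radN_of_eq_one_prime {a b N q : ℕ} (ha : 0 < a) (hb : 0 < b) (hq : q.Prime)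
    (h : ({a, b, a + b} : Multiset ℕ) = {1, N, q}) : a + b ≤ radN (a * b * (a + b)) := by
  have hq_mem : q ∈ ({a, b, a + b} : Multiset ℕ) := by rw [h]; simp
  have hone_mem : 1 ∈ ({a, b, a + b} : Multiset ℕ) := by rw [h]; simp
  simp only [Multiset.insert_eq_cons, Multiset.mem_cons, Multiset.mem_singleton] at hq_mem hone_mem
  have hq_ne_one := hq.ne_one
  obtain rfl | ⟨rfl, rfl⟩ | ⟨rfl, rfl⟩ : q = a + b ∨ (q = a ∧ b = 1) ∨ (q = b ∧ a = 1) := by lia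
  · exact le_radN_of_squarefree_of_dvd hq.prime.squarefree (dvd_mul_left _ _) (by positivity)
  · simpa using succ_le_radN_mul_succ hq.prime.squarefree
  · simpa [add_comm] using succ_le_radN_mul_succ hq.prime.squarefree

end Radical

section Norm

lemma IsDeriv.abs_le_dNorm {ψ : ℕ → ℤ} (hψ : IsDeriv ψ) (p : ℕ) : |(ψ p : ℝ)| ≤ dNorm ψ := by
  obtain ⟨-, B, hB⟩ := hψ
  refine le_ciSup (f := fun q => |(ψ q : ℝ)|) ⟨B, ?_⟩ p
  rintro _ ⟨q, rfl⟩
  dsimp only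
  exact_mod_cast hB q

lemma dNorm_nonneg (ψ : ℕ → ℤ) : 0 ≤ dNorm ψ :=
  Real.iSup_nonneg fun _ => abs_nonneg _

end Norm

section Divisibility

lemma dvd_radN_mul_dpsi (ψ : ℕ → ℤ) (n : ℤ) : n ∣ radN n.natAbs * dpsi ψ n := by
  rw [dpsi, mul_sum]
  refine dvd_sum fun p hp => ?_
  have hp_rad : (p : ℤ) ∣ radN n.natAbs :=
    Int.natCast_dvd_natCast.mpr (dvd_prod_of_mem (fun q => q) hp)
  have hp_n : (p : ℤ) ∣ n := Int.natCast_dvd.mpr (Nat.dvd_of_mem_primeFactors hp)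
  calc n = p * (n / p) := (Int.mul_ediv_cancel' hp_n).symm
    _ ∣ radN n.natAbs * (n / p * (n.natAbs.factorization p * ψ p)) :=
      mul_dvd_mul hp_rad (dvd_mul_right _ _)
    _ = radN n.natAbs * (n / p * n.natAbs.factorization p * ψ p) := by ring

lemma dvd_radN_mul_dpsi_of_dvd (ψ : ℕ → ℤ) {m n : ℤ} (hmn : m ∣ n) (hn : n ≠ 0) :
    m ∣ radN n.natAbs * dpsi ψ m :=
  (dvd_radN_mul_dpsi ψ m).trans <| mul_dvd_mul_right
    (Int.natCast_dvd_natCast.mpr <|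
      radN_dvd_radN (Int.natAbs_dvd_natAbs.mpr hmn) (Int.natAbs_ne_zero.mpr hn)) _

variable {ψ : ℕ → ℤ}

lemma mul_dvd_mul_Wpsi {r a b : ℤ} (ha : a ∣ r * dpsi ψ a) (hb : b ∣ r * dpsi ψ b) :
    a * b ∣ r * Wpsi ψ a b := by
  have h : r * Wpsi ψ a b = a * (r * dpsi ψ b) - r * dpsi ψ a * b := by
    rw [Wpsi]
    ring
  rw [h]
  exact dvd_sub (mul_dvd_mul_left a hb) (mul_dvd_mul_right ha b)

lemma Wpsi_add_right {a b : ℤ} (hadd : dpsi ψ (a + b) = dpsi ψ a + dpsi ψ b) :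
    Wpsi ψ a (a + b) = Wpsi ψ a b := by
  rw [Wpsi, Wpsi, hadd]
  ring

lemma mul_mul_add_dvd_radN_mul_Wpsi {a b : ℤ} (hab : IsCoprime a b) (h0 : a * b * (a + b) ≠ 0)
    (hadd : dpsi ψ (a + b) = dpsi ψ a + dpsi ψ b) :
    a * b * (a + b) ∣ radN (a * b * (a + b)).natAbs * Wpsi ψ a b := by
  have ha := dvd_radN_mul_dpsi_of_dvd ψ (Dvd.intro _ (mul_assoc a b (a + b)).symm) h0
  have hb := dvd_radN_mul_dpsi_of_dvd ψ ((dvd_mul_left b a).mul_right (a + b)) h0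
  have hc := dvd_radN_mul_dpsi_of_dvd ψ (dvd_mul_left (a + b) (a * b)) h0
  have hcop : IsCoprime (a * b) (a + b) := by
    refine IsCoprime.mul_left ?_ ?_
    · simpa [add_comm] using hab.add_mul_left_right 1
    · simpa using hab.symm.add_mul_left_right 1
  refine hcop.mul_dvd (mul_dvd_mul_Wpsi ha hb) ?_
  rw [← Wpsi_add_right hadd]
  exact (dvd_mul_left _ _).trans (mul_dvd_mul_Wpsi ha hc)

end Divisibility

section Size

variable {ψ : ℕ → ℤ} {K : ℝ}

lemma inv_le_log_of_two_le {x : ℝ} (hx : 2 ≤ x) : x⁻¹ ≤ Real.log x := by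
  have hinv : x⁻¹ ≤ 2⁻¹ := inv_anti₀ two_pos hx
  linarith [Real.one_sub_inv_le_log_of_pos (two_pos.trans_le hx)]

lemma log_mul_le_two_mul_log_add {x y : ℝ} (hx : 0 < x) (hy : 0 < y) :
    Real.log (x * y) ≤ 2 * Real.log (x + y) := by
  have hxy : x * y ≤ (x + y) ^ 2 := by nlinarith [sq_nonneg x, sq_nonneg y, mul_pos hx hy]
  simpa using Real.log_le_log (mul_pos hx hy) hxy

lemma abs_dpsi_le (hK : ∀ p, |(ψ p : ℝ)| ≤ K) (n : ℤ) :
    |(dpsi ψ n : ℝ)| ≤ K * (|(n : ℝ)| * Real.log n) := by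
  have hterm : ∀ p ∈ n.natAbs.primeFactors,
      |((n / p * n.natAbs.factorization p * ψ p : ℤ) : ℝ)| ≤
        K * |(n : ℝ)| * (n.natAbs.factorization p * Real.log p) := by
    intro p hp
    have hp_prime := Nat.prime_of_mem_primeFactors hp
    have hp_n : (p : ℤ) ∣ n := Int.natCast_dvd.mpr (Nat.dvd_of_mem_primeFactors hp)
    have hp0 : ((p : ℤ) : ℝ) ≠ 0 := by exact_mod_cast hp_prime.ne_zero
    calc |((n / p * n.natAbs.factorization p * ψ p : ℤ) : ℝ)|
        = |(ψ p : ℝ)| * |(n : ℝ)| * (n.natAbs.factorization p * (p : ℝ)⁻¹) := by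
          rw [Int.cast_mul, Int.cast_mul, Int.cast_div hp_n hp0, abs_mul, abs_mul, abs_div]
          simp only [Int.cast_natCast, Nat.abs_cast]
          ring
      _ ≤ K * |(n : ℝ)| * (n.natAbs.factorization p * Real.log p) := by
          have hK0 : 0 ≤ K := (abs_nonneg _).trans (hK p)
          gcongr
          · exact hK p
          · exact inv_le_log_of_two_le (mod_cast hp_prime.two_le)
  calc |(dpsi ψ n : ℝ)|
      ≤ ∑ p ∈ n.natAbs.primeFactors, |((n / p * n.natAbs.factorization p * ψ p : ℤ) : ℝ)| := by
        rw [dpsi, Int.cast_sum]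
        exact abs_sum_le_sum_abs _ _
    _ ≤ ∑ p ∈ n.natAbs.primeFactors,
          K * |(n : ℝ)| * (n.natAbs.factorization p * Real.log p) := sum_le_sum hterm
    _ = K * |(n : ℝ)| * Real.log (n.natAbs : ℝ) := by
        rw [← mul_sum, Real.log_nat_eq_sum_factorization, Finsupp.sum, Nat.support_factorization]
    _ = K * (|(n : ℝ)| * Real.log n) := by
        rw [Nat.cast_natAbs, Int.cast_abs, Real.log_abs, mul_assoc]

lemma abs_Wpsi_le (hK : ∀ p, |(ψ p : ℝ)| ≤ K) {a b : ℤ} (ha : a ≠ 0) (hb : b ≠ 0) :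
    |(Wpsi ψ a b : ℝ)| ≤ K * (|(a * b : ℝ)| * Real.log (a * b)) := by
  calc |(Wpsi ψ a b : ℝ)| ≤ |(a : ℝ)| * |(dpsi ψ b : ℝ)| + |(b : ℝ)| * |(dpsi ψ a : ℝ)| := by
        rw [Wpsi, Int.cast_sub, Int.cast_mul, Int.cast_mul, ← abs_mul, ← abs_mul]
        exact abs_sub _ _
    _ ≤ |(a : ℝ)| * (K * (|(b : ℝ)| * Real.log b)) +
          |(b : ℝ)| * (K * (|(a : ℝ)| * Real.log a)) := by
        gcongr <;> exact abs_dpsi_le hK _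
    _ = K * (|(a * b : ℝ)| * Real.log (a * b)) := by
        rw [Real.log_mul (mod_cast ha) (mod_cast hb), abs_mul]
        ring

end Size

section SmallDerivatives

variable {ψ : ℕ → ℤ} {a b : ℕ}

lemma add_le_radN_mul_dNorm_mul_log (hψ : IsDeriv ψ) (ha : 0 < a) (hb : 0 < b)
    (hab : a.Coprime b) (hadd : dpsi ψ (a + b) = dpsi ψ a + dpsi ψ b) (hW : Wpsi ψ a b ≠ 0) :
    ((a + b : ℕ) : ℝ) ≤ radN (a * b * (a + b)) * dNorm ψ * Real.log (a * b) := by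
  have hdvd : (a * b * (a + b) : ℤ) ∣ radN (a * b * (a + b)) * Wpsi ψ a b :=
    mul_mul_add_dvd_radN_mul_Wpsi hab.isCoprime (by positivity) hadd
  have hle : (a * b * (a + b) : ℤ) ≤ |radN (a * b * (a + b)) * Wpsi ψ a b| :=
    Int.le_of_dvd (abs_pos.mpr (mul_ne_zero (mod_cast (radN_pos _).ne') hW))
      ((dvd_abs _ _).mpr hdvd)
  have hsize : |(Wpsi ψ a b : ℝ)| ≤ dNorm ψ * (a * b * Real.log (a * b)) := by
    simpa using abs_Wpsi_le hψ.abs_le_dNorm (a := a) (b := b) (mod_cast ha.ne') (mod_cast hb.ne')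
  refine le_of_mul_le_mul_left ?_ (by positivity : (0 : ℝ) < a * b)
  calc (a * b * (a + b : ℕ) : ℝ) ≤ radN (a * b * (a + b)) * |(Wpsi ψ a b : ℝ)| := by
        rw [abs_mul, Nat.abs_cast] at hle
        exact_mod_cast hle
    _ ≤ radN (a * b * (a + b)) * (dNorm ψ * (a * b * Real.log (a * b))) := by gcongr
    _ = a * b * (radN (a * b * (a + b)) * dNorm ψ * Real.log (a * b)) := by ring

lemma rpow_le_dNorm_of_radN_le_rpow {s η : ℝ} (hψ : IsDeriv ψ) (ha : 0 < a) (hb : 0 < b)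
    (hab : a.Coprime b) (hadd : dpsi ψ (a + b) = dpsi ψ a + dpsi ψ b) (hW : Wpsi ψ a b ≠ 0)
    (hrad : (radN (a * b * (a + b)) : ℝ) ≤ ((a + b : ℕ) : ℝ) ^ s)
    (hlarge : 2 * ((a + b : ℕ) : ℝ) ^ (s + η) * Real.log (a + b : ℕ) < (a + b : ℕ)) :
    ((a + b : ℕ) : ℝ) ^ η ≤ dNorm ψ := by
  have hc : (0 : ℝ) < (a + b : ℕ) := by positivity
  by_contra! hsmall
  refine hlarge.not_ge ?_
  calc ((a + b : ℕ) : ℝ)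
      ≤ radN (a * b * (a + b)) * dNorm ψ * Real.log (a * b) :=
        add_le_radN_mul_dNorm_mul_log hψ ha hb hab hadd hW
    _ ≤ ((a + b : ℕ) : ℝ) ^ s * ((a + b : ℕ) : ℝ) ^ η * (2 * Real.log (a + b : ℕ)) := by
        have hnorm : 0 ≤ dNorm ψ := dNorm_nonneg ψ
        gcongr
        · exact_mod_cast Real.log_natCast_nonneg (a * b)
        · exact_mod_cast log_mul_le_two_mul_log_add (Nat.cast_pos.mpr ha) (Nat.cast_pos.mpr hb)
    _ = 2 * ((a + b : ℕ) : ℝ) ^ (s + η) * Real.log (a + b : ℕ) := by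
        rw [Real.rpow_add hc]
        ring

end SmallDerivatives

lemma eventually_mul_rpow_mul_log_lt {s : ℝ} (C : ℝ) (hs : s < 1) :
    ∀ᶠ x : ℝ in atTop, C * x ^ s * Real.log x < x := by
  have hlog := (isLittleO_log_rpow_atTop (sub_pos.mpr hs)).const_mul_left C
  filter_upwards [hlog.def one_half_pos, eventually_gt_atTop 0] with x hx hx0
  have hle : C * Real.log x ≤ 1 / 2 * x ^ (1 - s) := by
    simpa only [Real.norm_of_nonneg (Real.rpow_pos_of_pos hx0 _).le]
      using (Real.le_norm_self _).trans hx
  calc C * x ^ s * Real.log x = x ^ s * (C * Real.log x) := by ring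
    _ ≤ x ^ s * (1 / 2 * x ^ (1 - s)) :=
        mul_le_mul_of_nonneg_left hle (Real.rpow_nonneg hx0.le s)
    _ = x / 2 := by
        rw [mul_left_comm, ← Real.rpow_add hx0, add_sub_cancel, Real.rpow_one]
        ring
    _ < x := half_lt_self hx0

lemma finite_setOf_add_eq_lt (X : ℕ) :
    {t : ℕ × ℕ × ℕ | t.1 + t.2.1 = t.2.2 ∧ t.2.2 < X}.Finite := by
  refine ((Set.finite_Iio X).prod ((Set.finite_Iio X).prod (Set.finite_Iio X))).subset ?_
  rintro ⟨a, b, c⟩ ⟨hadd, hc⟩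
  simp only [Set.mem_prod, Set.mem_Iio] at hadd hc ⊢
  lia

/-- The Small Derivatives Conjecture implies Oesterlé's abc Conjecture. -/
theorem oesterle_abc_of_sdc (η : ℝ) (h0 : 0 < η) (h1 : η < 1) (hSDC : SDC η)
    (M : ℝ) (hM : 1 / (1 - η) < M) :
    {t : ℕ × ℕ × ℕ | 0 < t.1 ∧ 0 < t.2.1 ∧ t.1 + t.2.1 = t.2.2 ∧
      Nat.Coprime t.1 t.2.1 ∧
      (radN (t.1 * t.2.1 * t.2.2) : ℝ) ^ M ≤ (t.2.2 : ℝ)}.Finite := by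
  have hη : 0 < 1 - η := sub_pos.mpr h1
  have hM1 : 1 < M := (one_le_one_div hη (by linarith)).trans_lt hM
  have hM0 : 0 < M := one_pos.trans hM1
  have hexp : M⁻¹ + η < 1 := by
    linarith [inv_lt_of_inv_lt₀ hη (one_div (1 - η) ▸ hM)]
  obtain ⟨X, hX⟩ := eventually_atTop.mp
    (tendsto_natCast_atTop_atTop.eventually (eventually_mul_rpow_mul_log_lt 2 hexp))
  refine (hSDC.union (finite_setOf_add_eq_lt X)).subset ?_
  rintro ⟨a, b, c⟩ ⟨ha, hb, hadd, hab, hrad⟩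
  obtain rfl : a + b = c := hadd
  refine or_iff_not_imp_right.mpr fun hlarge => ⟨ha, hb, rfl, hab, ?_, ?_⟩
  · rintro ⟨N, q, hq, hexc⟩
    have hle : ((a + b : ℕ) : ℝ) ≤ radN (a * b * (a + b)) :=
      mod_cast add_le_radN_of_eq_one_prime ha hb hq hexc
    have hone : (1 : ℝ) < radN (a * b * (a + b)) :=
      lt_of_lt_of_le (mod_cast (by lia : 1 < a + b)) hle
    exact (hle.trans_lt (Real.self_lt_rpow_of_one_lt hone hM1)).not_ge hrad
  · rintro ⟨ψ, ⟨hψ, -, hadd⟩, hW, hsmall⟩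
    refine hsmall.not_ge (rpow_le_dNorm_of_radN_le_rpow hψ ha hb hab hadd hW ?_ (hX _ ?_))
    · exact (Real.le_rpow_inv_iff_of_pos (by positivity) (by positivity) hM0).mpr hrad
    · exact not_lt.mp fun hlt => hlarge ⟨rfl, hlt⟩
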